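/- (Error estimate for optimally chosen points on the subdomain.) Suppose there exist constants C₀ > 0 and α > 0 such that for every n ≥ 1 there is a finite set X_n ⊆ Ω with |X_n| ≤ n and sup_{x∈Ω} dist(Φ x, V(X_n)) ≤ C₀ n^{−α}. Then for every n ≥ 1, the optimal n-point power-function value on the subdomain satisfies inf over all finite sets Y ⊆ Ω̃ with |Y| ≤ n of sup_{x∈Ω̃} dist(Φ x, V(Y)) ≤ 2^{5α+1} C₀ n^{−α}. -/

import Mathlib

/-!
Choose points of the subdomain greedily. The Gram determinant of consecutive greedy elements,
projected off their `N` predecessors, is the product of the squared distances of these elements to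
the span of all earlier ones. In an orthonormal basis whose last vectors are orthogonal to an
approximating subspace `V`, Hadamard's inequality, the arithmetic-geometric mean inequality and
Bessel's inequality bound that determinant in terms of the errors of approximation from the first
`N` elements and from `V`. With `dim V ≤ m` and `2m` consecutive elements, the greedy error `E` and
the error `d` of `V` satisfy `E (N + 2m)² ≲ E N * d`, and iterating over powers of two transfers
the algebraic rate from arbitrary subspaces to the greedy ones. Exact maximizers are avoided: a
selection that is optimal up to the factor `2 ^ (-α / 2)` always exists, and it costs exactly the
factor `2 ^ α` for which the constant has room.
-/

open Module Metric InnerProductSpace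

section InfDist

theorem infDist_le_norm {R E : Type*} [Ring R] [SeminormedAddCommGroup E] [Module R E]
    (V : Submodule R E) (x : E) : infDist x (V : Set E) ≤ ‖x‖ :=
  (infDist_le_dist_of_mem V.zero_mem).trans_eq (dist_zero_right x)

theorem infDist_map_le_of_norm_le_one {𝕜 E F : Type*} [NontriviallyNormedField 𝕜]
    [SeminormedAddCommGroup E] [NormedSpace 𝕜 E] [SeminormedAddCommGroup F] [NormedSpace 𝕜 F]
    {T : E →L[𝕜] F} (hT : ‖T‖ ≤ 1) (V : Submodule 𝕜 E) (x : E) :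
    infDist (T x) (V.map (T : E →ₗ[𝕜] F) : Set F) ≤ infDist x (V : Set E) := by
  refine (le_infDist ⟨0, V.zero_mem⟩).2 fun v hv => ?_
  calc infDist (T x) (V.map (T : E →ₗ[𝕜] F) : Set F) ≤ dist (T x) (T v) :=
        infDist_le_dist_of_mem (Submodule.mem_map_of_mem hv)
    _ ≤ dist x v := by
        simpa only [dist_eq_norm, map_sub, one_mul] using T.le_of_opNorm_le hT (x - v)

variable {𝕜 E : Type*} [RCLike 𝕜] [NormedAddCommGroup E] [InnerProductSpace 𝕜 E]

theorem infDist_eq_norm_sub_starProjection (V : Submodule 𝕜 E) [V.HasOrthogonalProjection]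
    (x : E) : infDist x (V : Set E) = ‖x - V.starProjection x‖ := by
  simp only [infDist_eq_iInf, dist_eq_norm, Submodule.starProjection_minimal, SetLike.coe_sort_coe]

theorem infDist_sup_le_infDist_map_starProjection_orthogonal (U V : Submodule 𝕜 E)
    [U.HasOrthogonalProjection] (x : E) :
    infDist x (U ⊔ V : Submodule 𝕜 E) ≤
      infDist (Uᗮ.starProjection x) (V.map (Uᗮ.starProjection : E →ₗ[𝕜] E) : Set E) := by
  refine (le_infDist ⟨0, Submodule.zero_mem _⟩).2 ?_
  rintro _ ⟨v, hv, rfl⟩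
  have hmem : U.starProjection (x - v) + v ∈ U ⊔ V :=
    Submodule.add_mem_sup (U.starProjection_apply_mem _) hv
  refine (infDist_le_dist_of_mem hmem).trans_eq ?_
  rw [dist_eq_norm, dist_eq_norm, ContinuousLinearMap.coe_coe, ← map_sub,
    Submodule.starProjection_orthogonal_val]
  congr 1
  abel

end InfDist

section Gram

variable {𝕜 E : Type*} [RCLike 𝕜] [NormedAddCommGroup E] [InnerProductSpace 𝕜 E]

section GramSchmidt

variable {ι : Type*} [LinearOrder ι] [LocallyFiniteOrderBot ι] [WellFoundedLT ι]

theorem sub_gramSchmidt_mem_span_image_Iio (f : ι → E) (i : ι) :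
    f i - gramSchmidt 𝕜 f i ∈ Submodule.span 𝕜 (f '' Set.Iio i) := by
  rw [← span_gramSchmidt_Iio, sub_eq_of_eq_add' (gramSchmidt_def'' 𝕜 f i)]
  exact Submodule.sum_mem _ fun k hk => Submodule.smul_mem _ _
    (Submodule.subset_span ⟨k, Finset.mem_Iio.1 hk, rfl⟩)

theorem inner_gramSchmidt_eq_zero_of_mem_span (f : ι → E) {i : ι} {v : E}
    (hv : v ∈ Submodule.span 𝕜 (f '' Set.Iio i)) : inner 𝕜 (gramSchmidt 𝕜 f i) v = 0 := by
  rw [← Submodule.mem_orthogonal_singleton_iff_inner_right]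
  refine Submodule.span_le.2 ?_ hv
  rintro _ ⟨k, hk, rfl⟩
  exact Submodule.mem_orthogonal_singleton_iff_inner_right.2 (gramSchmidt_inv_triangular 𝕜 f hk)

theorem inner_gramSchmidt_self_right (f : ι → E) (i : ι) :
    inner 𝕜 (gramSchmidt 𝕜 f i) (f i) = (‖gramSchmidt 𝕜 f i‖ : 𝕜) ^ 2 := by
  have h := inner_gramSchmidt_eq_zero_of_mem_span f
    (sub_gramSchmidt_mem_span_image_Iio (𝕜 := 𝕜) f i)
  rwa [inner_sub_right, inner_self_eq_norm_sq_to_K, sub_eq_zero] at h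

theorem norm_gramSchmidt_eq_infDist (f : ι → E) (i : ι) :
    ‖gramSchmidt 𝕜 f i‖ = infDist (f i) (Submodule.span 𝕜 (f '' Set.Iio i) : Set E) := by
  have : FiniteDimensional 𝕜 (Submodule.span 𝕜 (f '' Set.Iio i)) :=
    FiniteDimensional.span_of_finite 𝕜 ((Set.finite_Iio i).image f)
  have hproj : (Submodule.span 𝕜 (f '' Set.Iio i)).starProjection (f i) =
      f i - gramSchmidt 𝕜 f i :=
    Submodule.eq_starProjection_of_mem_of_inner_eq_zero (sub_gramSchmidt_mem_span_image_Iio f i)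
      fun v hv => by rw [sub_sub_cancel, inner_gramSchmidt_eq_zero_of_mem_span f hv]
  rw [infDist_eq_norm_sub_starProjection, hproj, sub_sub_cancel]

variable [Fintype ι]

theorem eq_sum_gramSchmidt (f : ι → E) (i : ι) :
    f i = ∑ k, (inner 𝕜 (gramSchmidt 𝕜 f k) (f i) / (‖gramSchmidt 𝕜 f k‖ : 𝕜) ^ 2) •
      gramSchmidt 𝕜 f k := by
  have hzero : ∀ k ∉ Finset.Iic i, (inner 𝕜 (gramSchmidt 𝕜 f k) (f i) /
      (‖gramSchmidt 𝕜 f k‖ : 𝕜) ^ 2) • gramSchmidt 𝕜 f k = 0 := fun k hk => by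
    rw [gramSchmidt_inv_triangular 𝕜 f (by simpa using hk), zero_div, zero_smul]
  have hself : (inner 𝕜 (gramSchmidt 𝕜 f i) (f i) / (‖gramSchmidt 𝕜 f i‖ : 𝕜) ^ 2) •
      gramSchmidt 𝕜 f i = gramSchmidt 𝕜 f i := by
    rcases eq_or_ne (gramSchmidt 𝕜 f i) 0 with h | h
    · simp only [h, smul_zero]
    · rw [inner_gramSchmidt_self_right, div_self (by simpa using h), one_smul]
  rw [← Finset.sum_subset (Finset.subset_univ _) fun k _ => hzero k, ← Finset.Iio_insert,
    Finset.sum_insert Finset.notMem_Iio_self, hself]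
  exact gramSchmidt_def'' 𝕜 f i

theorem det_gram_eq_prod_infDist_sq (f : ι → E) :
    (Matrix.gram 𝕜 f).det =
      ∏ i, (infDist (f i) (Submodule.span 𝕜 (f '' Set.Iio i) : Set E) : 𝕜) ^ 2 := by
  let g := gramSchmidt 𝕜 f
  let S : Matrix ι ι 𝕜 := Matrix.of fun i k => inner 𝕜 (f i) (g k)
  let T : Matrix ι ι 𝕜 := Matrix.of fun i k => inner 𝕜 (g k) (f i) / (‖g k‖ : 𝕜) ^ 2
  have hgram : Matrix.gram 𝕜 f = S * T.transpose := by
    ext i j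
    rw [Matrix.gram_apply, Matrix.mul_apply]
    conv_lhs => rw [eq_sum_gramSchmidt (𝕜 := 𝕜) f j, inner_sum]
    exact Finset.sum_congr rfl fun k _ => by rw [inner_smul_right, mul_comm]; rfl
  have hS : S.IsLowerTriangular := fun i k (hik : i < k) =>
    inner_eq_zero_symm.1 (gramSchmidt_inv_triangular 𝕜 f hik)
  have hT : T.IsLowerTriangular := fun i k (hik : i < k) =>
    div_eq_zero_iff.2 (.inl (gramSchmidt_inv_triangular 𝕜 f hik))
  rw [hgram, Matrix.det_mul, Matrix.det_transpose, Matrix.det_of_isLowerTriangular S hS,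
    Matrix.det_of_isLowerTriangular T hT, ← Finset.prod_mul_distrib]
  refine Finset.prod_congr rfl fun i _ => ?_
  have hSii : S i i = (‖g i‖ : 𝕜) ^ 2 := by
    change inner 𝕜 (f i) (g i) = _
    rw [← inner_conj_symm, inner_gramSchmidt_self_right, map_pow, RCLike.conj_ofReal]
  have hTii : T i i = (‖g i‖ : 𝕜) ^ 2 / (‖g i‖ : 𝕜) ^ 2 :=
    congrArg (· / (‖g i‖ : 𝕜) ^ 2) (inner_gramSchmidt_self_right f i)
  rw [hSii, hTii, ← norm_gramSchmidt_eq_infDist, ← mul_div_assoc, mul_self_div_self]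

theorem norm_det_gram_eq_prod_infDist_sq (f : ι → E) :
    ‖(Matrix.gram 𝕜 f).det‖ =
      ∏ i, infDist (f i) (Submodule.span 𝕜 (f '' Set.Iio i) : Set E) ^ 2 := by
  simp only [det_gram_eq_prod_infDist_sq, norm_prod, norm_pow, RCLike.norm_ofReal, sq_abs]

theorem norm_det_gram_le_prod_norm_sq (f : ι → E) :
    ‖(Matrix.gram 𝕜 f).det‖ ≤ ∏ i, ‖f i‖ ^ 2 := by
  rw [norm_det_gram_eq_prod_infDist_sq]
  gcongr with i
  · exact infDist_nonneg
  · exact infDist_le_norm _ _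

end GramSchmidt

theorem norm_det_gram_le_prod_sum_norm_inner_sq {n : ℕ} (b : OrthonormalBasis (Fin n) 𝕜 E)
    (f : Fin n → E) :
    ‖(Matrix.gram 𝕜 f).det‖ ≤ ∏ i, ∑ j, ‖inner 𝕜 (b i) (f j)‖ ^ 2 := by
  let row : Fin n → EuclideanSpace 𝕜 (Fin n) := fun i => WithLp.toLp 2 fun j => inner 𝕜 (f j) (b i)
  have hdet : (Matrix.gram 𝕜 f).det = (Matrix.gram 𝕜 row).det := by
    rw [Matrix.gram_eq_conjTranspose_mul b, Matrix.det_mul_comm]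
    congr 1
    ext i k
    simp [Matrix.mul_apply, row, PiLp.inner_apply, b.repr_apply_apply, mul_comm]
  have hrow : ∀ i, ‖row i‖ ^ 2 = ∑ j, ‖inner 𝕜 (b i) (f j)‖ ^ 2 := fun i => by
    simp only [EuclideanSpace.norm_sq_eq, row, norm_inner_symm (b i)]
  simpa only [hdet, hrow] using norm_det_gram_le_prod_norm_sq (𝕜 := 𝕜) row

theorem exists_orthonormalBasis_natAdd_mem_orthogonal [FiniteDimensional 𝕜 E] {m l : ℕ}
    (hE : finrank 𝕜 E = m + l) (W : Submodule 𝕜 E) (hW : finrank 𝕜 W ≤ m) :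
    ∃ b : OrthonormalBasis (Fin (m + l)) 𝕜 E, ∀ j : Fin l, b (Fin.natAdd m j) ∈ Wᗮ := by
  have hl : l ≤ finrank 𝕜 Wᗮ := by
    have := W.finrank_add_finrank_orthogonal
    lia
  let u : Fin l → E := fun j => stdOrthonormalBasis 𝕜 Wᗮ (Fin.castLE hl j)
  have hu : Orthonormal 𝕜 u :=
    ((stdOrthonormalBasis 𝕜 Wᗮ).orthonormal.comp_linearIsometry Wᗮ.subtypeₗᵢ).comp _
      (Fin.castLE_injective hl)
  let v : Fin (m + l) → E := Fin.append 0 u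
  have hv : Orthonormal 𝕜 ((Set.range (Fin.natAdd m)).domRestrict v) := by
    have hcomp := hu.comp _ (Equiv.ofInjective _ (Fin.natAdd_injective l m)).symm.injective
    convert hcomp using 1
    ext1 ⟨_, j, rfl⟩
    simp [v, Set.domRestrict]
  obtain ⟨b, hb⟩ := hv.exists_orthonormalBasis_extension_of_card_eq (by simpa using hE)
  refine ⟨b, fun j => ?_⟩
  rw [hb _ ⟨j, rfl⟩, show v (Fin.natAdd m j) = u j from Fin.append_right _ _ j]
  exact Submodule.coe_mem _

theorem prod_le_sum_div_card_pow {ι : Type*} (s : Finset ι) {z : ι → ℝ}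
    (hz : ∀ i ∈ s, 0 ≤ z i) : ∏ i ∈ s, z i ≤ ((∑ i ∈ s, z i) / s.card) ^ s.card := by
  rcases s.eq_empty_or_nonempty with rfl | hs
  · simp
  have hprod : 0 ≤ ∏ i ∈ s, z i := Finset.prod_nonneg hz
  have hcard : s.card ≠ 0 := hs.card_ne_zero
  have hmean := Real.geom_mean_le_arith_mean s (fun _ => 1) z (fun _ _ => zero_le_one)
    (by simpa using hs) hz
  simp only [Real.rpow_one, one_mul, Finset.sum_const, nsmul_eq_mul, mul_one] at hmean
  calc ∏ i ∈ s, z i = ((∏ i ∈ s, z i) ^ (s.card : ℝ)⁻¹) ^ s.card :=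
        (Real.rpow_inv_natCast_pow hprod hcard).symm
    _ ≤ ((∑ i ∈ s, z i) / s.card) ^ s.card := by gcongr

theorem prod_sum_norm_inner_sq_le {ι : Type*} [Fintype ι] {k : ℕ} {u : Fin k → E}
    (hu : Orthonormal 𝕜 u) (f : ι → E) :
    ∏ i, ∑ j, ‖inner 𝕜 (u i) (f j)‖ ^ 2 ≤ ((∑ j, ‖f j‖ ^ 2) / k) ^ k := by
  calc ∏ i, ∑ j, ‖inner 𝕜 (u i) (f j)‖ ^ 2
      ≤ ((∑ i, ∑ j, ‖inner 𝕜 (u i) (f j)‖ ^ 2) / k) ^ k := by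
        simpa using prod_le_sum_div_card_pow Finset.univ
          (z := fun i => ∑ j, ‖inner 𝕜 (u i) (f j)‖ ^ 2)
          fun i _ => Finset.sum_nonneg fun j _ => sq_nonneg _
    _ ≤ ((∑ j, ‖f j‖ ^ 2) / k) ^ k := by
        rw [Finset.sum_comm]
        gcongr with j
        exact hu.sum_inner_products_le (f j)

theorem norm_det_gram_le_of_finrank_eq [FiniteDimensional 𝕜 E] {m l : ℕ}
    (hE : finrank 𝕜 E = m + l) (W : Submodule 𝕜 E) (hW : finrank 𝕜 W ≤ m)
    (f : Fin (m + l) → E) :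
    ‖(Matrix.gram 𝕜 f).det‖ ≤
      ((∑ i, ‖f i‖ ^ 2) / m) ^ m * ((∑ i, infDist (f i) (W : Set E) ^ 2) / l) ^ l := by
  obtain ⟨b, hb⟩ := exists_orthonormalBasis_natAdd_mem_orthogonal hE W hW
  have hinner : ∀ i j, inner 𝕜 (b (Fin.natAdd m i)) (f j) =
      inner 𝕜 (b (Fin.natAdd m i)) (f j - W.starProjection (f j)) := fun i j => by
    rw [inner_sub_right, W.inner_left_of_mem_orthogonal (W.starProjection_apply_mem _) (hb i),
      sub_zero]
  refine (norm_det_gram_le_prod_sum_norm_inner_sq b f).trans ?_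
  simp only [Fin.prod_univ_add, hinner, infDist_eq_norm_sub_starProjection]
  gcongr
  · exact prod_sum_norm_inner_sq_le (b.orthonormal.comp _ (Fin.castAdd_injective m l)) f
  · exact prod_sum_norm_inner_sq_le (b.orthonormal.comp _ (Fin.natAdd_injective l m)) _

theorem norm_det_gram_le {m l : ℕ} (V : Submodule 𝕜 E) [FiniteDimensional 𝕜 V]
    (hV : finrank 𝕜 V ≤ m) (f : Fin (m + l) → E) :
    ‖(Matrix.gram 𝕜 f).det‖ ≤
      ((∑ i, ‖f i‖ ^ 2) / m) ^ m * ((∑ i, infDist (f i) (V : Set E) ^ 2) / l) ^ l := by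
  by_cases hf : LinearIndependent 𝕜 f
  · let S := Submodule.span 𝕜 (Set.range f)
    have : FiniteDimensional 𝕜 S := FiniteDimensional.span_of_finite 𝕜 (Set.finite_range f)
    have hS : finrank 𝕜 S = m + l := by simpa using finrank_span_eq_card hf
    let r : Fin (m + l) → S := fun i => ⟨f i, Submodule.subset_span ⟨i, rfl⟩⟩
    let P : E →L[𝕜] S := S.orthogonalProjectionOnto
    have hP : ∀ i, P (f i) = r i := fun i =>
      S.orthogonalProjectionOnto_mem_subspace_eq_self (r i)
    refine (norm_det_gram_le_of_finrank_eq hS (V.map (P : E →ₗ[𝕜] S))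
      ((Submodule.finrank_map_le _ V).trans hV) r).trans ?_
    gcongr with i _ i
    · exact le_rfl
    · exact infDist_nonneg
    · rw [← hP i]
      exact infDist_map_le_of_norm_le_one S.orthogonalProjectionOnto_norm_le V (f i)
  · rw [← Matrix.det_gram_ne_zero_iff_linearIndependent, not_not] at hf
    rw [hf, norm_zero]
    positivity

theorem prod_infDist_sup_span_sq_le {m l : ℕ} (U V : Submodule 𝕜 E) [U.HasOrthogonalProjection]
    [FiniteDimensional 𝕜 V] (hV : finrank 𝕜 V ≤ m) (f : Fin (m + l) → E) :
    ∏ i, infDist (f i) (U ⊔ Submodule.span 𝕜 (f '' Set.Iio i) : Submodule 𝕜 E) ^ 2 ≤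
      ((∑ i, infDist (f i) (U : Set E) ^ 2) / m) ^ m *
        ((∑ i, infDist (f i) (V : Set E) ^ 2) / l) ^ l := by
  let Q : E →L[𝕜] E := Uᗮ.starProjection
  let r : Fin (m + l) → E := fun i => Q (f i)
  have hspan : ∀ i, Submodule.span 𝕜 (r '' Set.Iio i) =
      (Submodule.span 𝕜 (f '' Set.Iio i)).map (Q : E →ₗ[𝕜] E) := fun i => by
    rw [Submodule.map_span, ← Set.image_comp]; rfl
  calc ∏ i, infDist (f i) (U ⊔ Submodule.span 𝕜 (f '' Set.Iio i) : Submodule 𝕜 E) ^ 2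
      ≤ ∏ i, infDist (r i) (Submodule.span 𝕜 (r '' Set.Iio i) : Set E) ^ 2 := by
        gcongr with i
        · exact infDist_nonneg
        · rw [hspan]
          exact infDist_sup_le_infDist_map_starProjection_orthogonal U _ (f i)
    _ = ‖(Matrix.gram 𝕜 r).det‖ := (norm_det_gram_eq_prod_infDist_sq r).symm
    _ ≤ ((∑ i, ‖r i‖ ^ 2) / m) ^ m *
          ((∑ i, infDist (r i) (V.map (Q : E →ₗ[𝕜] E) : Set E) ^ 2) / l) ^ l :=
        norm_det_gram_le _ ((Submodule.finrank_map_le _ V).trans hV) r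
    _ ≤ _ := by
        gcongr with i _ i
        · rw [infDist_eq_norm_sub_starProjection, ← Submodule.starProjection_orthogonal_val]
        · exact infDist_nonneg
        · exact infDist_map_le_of_norm_le_one Uᗮ.starProjection_norm_le V (f i)

end Gram

section WeakGreedy

variable {𝕜 H : Type*} [NormedField 𝕜] [NormedAddCommGroup H] [NormedSpace 𝕜 H]

variable (𝕜) in
/-- The span of the first `n` terms of a sequence, written `V_n` in the literature. -/
def prefixSpan (f : ℕ → H) (n : ℕ) : Submodule 𝕜 H :=
  Submodule.span 𝕜 (f '' Set.Iio n)

variable (𝕜) in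
/-- The worst-case error over `K` of approximation from the span of the first `n` terms of `f`,
the quantity whose decay measures the quality of a greedy sequence. It is the junk value `0` if
these errors are unbounded. -/
noncomputable def greedyError (K : Set H) (f : ℕ → H) (n : ℕ) : ℝ :=
  ⨆ y : K, infDist (y : H) (prefixSpan 𝕜 f n : Set H)

variable (𝕜) in
/-- A sequence in `K` is weakly greedy with parameter `γ` if each term attains, up to the factor
`γ`, the largest distance in `K` to the span of its predecessors. The plain greedy algorithm is
the case `γ = 1`; factors `γ < 1` make such sequences exist without compactness of `K`. -/
structure IsWeakGreedy (γ : ℝ) (K : Set H) (f : ℕ → H) : Prop where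
  mem : ∀ n, f n ∈ K
  le : ∀ n, ∀ y ∈ K, γ * infDist y (prefixSpan 𝕜 f n : Set H) ≤
    infDist (f n) (prefixSpan 𝕜 f n : Set H)

theorem prefixSpan_mono (f : ℕ → H) : Monotone (prefixSpan 𝕜 f) := fun _ _ h =>
  Submodule.span_mono (Set.image_mono (Set.Iio_subset_Iio h))

theorem prefixSpan_add (f : ℕ → H) (N : ℕ) {k : ℕ} (i : Fin k) :
    prefixSpan 𝕜 f (N + i) =
      prefixSpan 𝕜 f N ⊔ Submodule.span 𝕜 ((fun j : Fin k => f (N + j)) '' Set.Iio i) := by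
  rw [prefixSpan, prefixSpan, ← Submodule.span_union]
  congr 1
  ext x
  constructor
  · rintro ⟨j, hj, rfl⟩
    rcases lt_or_ge j N with hjN | hNj
    · exact .inl ⟨j, hjN, rfl⟩
    · obtain ⟨j, rfl⟩ := Nat.exists_eq_add_of_le hNj
      have hji : j < i := Nat.lt_of_add_lt_add_left hj
      exact .inr ⟨⟨j, hji.trans i.2⟩, hji, rfl⟩
  · rintro (⟨j, hj, rfl⟩ | ⟨j, hj, rfl⟩)
    · exact ⟨j, Nat.lt_add_right _ hj, rfl⟩
    · exact ⟨N + j, Nat.add_lt_add_left hj N, rfl⟩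

instance finiteDimensional_prefixSpan (f : ℕ → H) (n : ℕ) :
    FiniteDimensional 𝕜 (prefixSpan 𝕜 f n) :=
  FiniteDimensional.span_of_finite 𝕜 ((Set.finite_Iio n).image f)

theorem exists_forall_eq_apply_prefixSpan (pick : Submodule 𝕜 H → H) :
    ∃ f : ℕ → H, ∀ n, f n = pick (prefixSpan 𝕜 f n) :=
  ⟨WellFoundedLT.fix fun n g => pick (Submodule.span 𝕜 (Set.range fun i : Set.Iio n => g i i.2)),
    fun n => by rw [WellFoundedLT.fix_eq, prefixSpan, Set.image_eq_range]⟩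

theorem bddAbove_range_infDist {ι : Type*} {g : ι → H}
    (hg : Bornology.IsBounded (Set.range g)) (V : Submodule 𝕜 H) :
    BddAbove (Set.range fun i => infDist (g i) (V : Set H)) := by
  obtain ⟨R, hR⟩ := hg.exists_norm_le
  exact ⟨R, Set.forall_mem_range.2 fun i => (infDist_le_norm V _).trans (hR _ ⟨i, rfl⟩)⟩

theorem exists_mem_forall_mul_infDist_le {K : Set H} (hK : K.Nonempty)
    (hbdd : Bornology.IsBounded K) {γ : ℝ} (hγ : γ < 1) (V : Submodule 𝕜 H) :
    ∃ x ∈ K, ∀ y ∈ K, γ * infDist y (V : Set H) ≤ infDist x (V : Set H) := by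
  have hle := le_ciSup (bddAbove_range_infDist (g := ((↑) : K → H)) (by simpa using hbdd) V)
  by_cases! hpos : ∃ x ∈ K, 0 < infDist x (V : Set H)
  · obtain ⟨x₀, hx₀, hpos⟩ := hpos
    have hsup : 0 < ⨆ y : K, infDist (y : H) (V : Set H) := hpos.trans_le (hle ⟨x₀, hx₀⟩)
    have : Nonempty K := ⟨⟨x₀, hx₀⟩⟩
    obtain ⟨⟨x, hx⟩, hlt⟩ := exists_lt_of_lt_ciSup (mul_lt_of_lt_one_left hsup hγ)
    refine ⟨x, hx, fun y hy => ?_⟩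
    rcases le_total γ 0 with hγ0 | hγ0
    · exact (mul_nonpos_of_nonpos_of_nonneg hγ0 infDist_nonneg).trans infDist_nonneg
    · exact (mul_le_mul_of_nonneg_left (hle ⟨y, hy⟩) hγ0).trans hlt.le
  · obtain ⟨x, hx⟩ := hK
    refine ⟨x, hx, fun y hy => ?_⟩
    rw [(hpos y hy).antisymm infDist_nonneg, mul_zero]
    exact infDist_nonneg

theorem exists_isWeakGreedy {K : Set H} (hK : K.Nonempty) (hbdd : Bornology.IsBounded K) {γ : ℝ}
    (hγ : γ < 1) : ∃ f, IsWeakGreedy 𝕜 γ K f := by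
  choose pick hmem hle using exists_mem_forall_mul_infDist_le (𝕜 := 𝕜) hK hbdd hγ
  obtain ⟨f, hf⟩ := exists_forall_eq_apply_prefixSpan pick
  refine ⟨f, fun n => hf n ▸ hmem _, fun n => ?_⟩
  rw [hf n]
  exact hle _

theorem greedyError_nonneg (K : Set H) (f : ℕ → H) (n : ℕ) : 0 ≤ greedyError 𝕜 K f n :=
  Real.iSup_nonneg fun _ => infDist_nonneg

namespace IsWeakGreedy

variable {γ : ℝ} {K : Set H} {f : ℕ → H}

theorem infDist_le_greedyError (hf : IsWeakGreedy 𝕜 γ K f) (hγ : 0 < γ) (n : ℕ) {y : H}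
    (hy : y ∈ K) : infDist y (prefixSpan 𝕜 f n : Set H) ≤ greedyError 𝕜 K f n := by
  have hbdd : BddAbove (Set.range fun y : K => infDist (y : H) (prefixSpan 𝕜 f n : Set H)) :=
    ⟨infDist (f n) (prefixSpan 𝕜 f n : Set H) / γ,
      Set.forall_mem_range.2 fun y => (le_div_iff₀' hγ).2 (hf.le n y y.2)⟩
  exact le_ciSup hbdd ⟨y, hy⟩

theorem mul_greedyError_le (hf : IsWeakGreedy 𝕜 γ K f) (hγ : 0 < γ) (n : ℕ) :
    γ * greedyError 𝕜 K f n ≤ infDist (f n) (prefixSpan 𝕜 f n : Set H) := by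
  rw [greedyError, Real.mul_iSup_of_nonneg hγ.le]
  exact Real.iSup_le (fun y => hf.le n y y.2) infDist_nonneg

theorem antitone_greedyError (hf : IsWeakGreedy 𝕜 γ K f) (hγ : 0 < γ) :
    Antitone (greedyError 𝕜 K f) := fun _ _ h =>
  Real.iSup_le (fun y => (infDist_le_infDist_of_subset (prefixSpan_mono f h)
    (Submodule.nonempty _)).trans (hf.infDist_le_greedyError hγ _ y.2)) (greedyError_nonneg K f _)

end IsWeakGreedy

end WeakGreedy

section WeakGreedyHilbert

variable {𝕜 H : Type*} [RCLike 𝕜] [NormedAddCommGroup H] [InnerProductSpace 𝕜 H]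
  {γ : ℝ} {K : Set H} {f : ℕ → H}

namespace IsWeakGreedy

theorem prod_greedyError_le (hf : IsWeakGreedy 𝕜 γ K f) (hγ : 0 < γ) {V : Submodule 𝕜 H}
    [FiniteDimensional 𝕜 V] {m l : ℕ} (hV : finrank 𝕜 V ≤ m) {d : ℝ}
    (hd : ∀ y ∈ K, infDist y (V : Set H) ≤ d) (N : ℕ) :
    ∏ i : Fin (m + l), (γ * greedyError 𝕜 K f (N + i)) ^ 2 ≤
      ((m + l) * greedyError 𝕜 K f N ^ 2 / m) ^ m * ((m + l) * d ^ 2 / l) ^ l := by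
  have hE := greedyError_nonneg (𝕜 := 𝕜) K f
  calc ∏ i : Fin (m + l), (γ * greedyError 𝕜 K f (N + i)) ^ 2
      ≤ ∏ i : Fin (m + l), infDist (f (N + i)) (prefixSpan 𝕜 f (N + i) : Set H) ^ 2 := by
        gcongr with i
        · exact mul_nonneg hγ.le (hE _)
        · exact hf.mul_greedyError_le hγ _
    _ ≤ ((∑ i : Fin (m + l), infDist (f (N + i)) (prefixSpan 𝕜 f N : Set H) ^ 2) / m) ^ m *
          ((∑ i : Fin (m + l), infDist (f (N + i)) (V : Set H) ^ 2) / l) ^ l := by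
        simp only [prefixSpan_add]
        exact prod_infDist_sup_span_sq_le _ V hV _
    _ ≤ ((∑ _i : Fin (m + l), greedyError 𝕜 K f N ^ 2) / m) ^ m *
          ((∑ _i : Fin (m + l), d ^ 2) / l) ^ l := by
        gcongr with i _ i
        · exact infDist_nonneg
        · exact hf.infDist_le_greedyError hγ _ (hf.mem _)
        · exact infDist_nonneg
        · exact hd _ (hf.mem _)
    _ = _ := by simp

theorem sq_mul_greedyError_one_le (hf : IsWeakGreedy 𝕜 γ K f) (hγ : 0 < γ) {V : Submodule 𝕜 H}
    [FiniteDimensional 𝕜 V] (hV : finrank 𝕜 V ≤ 1) {d : ℝ}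
    (hd : ∀ y ∈ K, infDist y (V : Set H) ≤ d) : γ ^ 2 * greedyError 𝕜 K f 1 ≤ 2 * d := by
  have hd0 : 0 ≤ d := infDist_nonneg.trans (hd _ (hf.mem 0))
  have hE := greedyError_nonneg (𝕜 := 𝕜) K f
  rcases (hE 0).eq_or_lt with h0 | h0
  · have h1 : greedyError 𝕜 K f 1 = 0 :=
      ((hf.antitone_greedyError hγ zero_le_one).trans_eq h0.symm).antisymm (hE 1)
    rw [h1, mul_zero]
    positivity
  · have hprod := hf.prod_greedyError_le hγ (l := 1) hV hd 0
    have hsq : (γ ^ 2 * greedyError 𝕜 K f 1 * greedyError 𝕜 K f 0) ^ 2 ≤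
        (2 * d * greedyError 𝕜 K f 0) ^ 2 := by
      calc _ = (γ * greedyError 𝕜 K f 0) ^ 2 * (γ * greedyError 𝕜 K f 1) ^ 2 := by ring
        _ = ∏ i : Fin (1 + 1), (γ * greedyError 𝕜 K f (0 + i)) ^ 2 :=
            (Fin.prod_univ_two fun i => (γ * greedyError 𝕜 K f (0 + i)) ^ 2).symm
        _ ≤ _ := hprod
        _ = _ := by push_cast; ring
    exact le_of_mul_le_mul_right (le_of_sq_le_sq hsq (by positivity)) h0

theorem sq_mul_greedyError_add_le (hf : IsWeakGreedy 𝕜 γ K f) (hγ : 0 < γ) {V : Submodule 𝕜 H}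
    [FiniteDimensional 𝕜 V] {m : ℕ} (hm : m ≠ 0) (hV : finrank 𝕜 V ≤ m) {d : ℝ}
    (hd : ∀ y ∈ K, infDist y (V : Set H) ≤ d) (N : ℕ) :
    (γ * greedyError 𝕜 K f (N + 2 * m)) ^ 2 ≤ 2 * (greedyError 𝕜 K f N * d) := by
  have hd0 : 0 ≤ d := infDist_nonneg.trans (hd _ (hf.mem 0))
  have hE := greedyError_nonneg (𝕜 := 𝕜) K f
  have hpow : ((γ * greedyError 𝕜 K f (N + 2 * m)) ^ 2) ^ (m + m) ≤
      (2 * (greedyError 𝕜 K f N * d)) ^ (m + m) := by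
    calc ((γ * greedyError 𝕜 K f (N + 2 * m)) ^ 2) ^ (m + m)
        = ∏ _i : Fin (m + m), (γ * greedyError 𝕜 K f (N + 2 * m)) ^ 2 := by
          rw [Finset.prod_const, Finset.card_univ, Fintype.card_fin]
      _ ≤ ∏ i : Fin (m + m), (γ * greedyError 𝕜 K f (N + i)) ^ 2 := by
          gcongr with i
          · exact mul_nonneg hγ.le (hE _)
          · exact hf.antitone_greedyError hγ (by lia)
      _ ≤ ((m + m) * greedyError 𝕜 K f N ^ 2 / m) ^ m * ((m + m) * d ^ 2 / m) ^ m :=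
          hf.prod_greedyError_le hγ hV hd N
      _ = (2 * (greedyError 𝕜 K f N * d)) ^ (m + m) := by
          have hm' : (m : ℝ) ≠ 0 := Nat.cast_ne_zero.2 hm
          rw [← mul_pow, ← two_mul m, pow_mul]
          congr 1
          field_simp
          ring
  exact le_of_pow_le_pow_left₀ (by lia) (by have := hE N; positivity) hpow

end IsWeakGreedy

end WeakGreedyHilbert

section Rate

theorem two_pow_rpow_neg (k : ℕ) (α : ℝ) : ((2 : ℝ) ^ k) ^ (-α) = ((2 ^ α) ^ k)⁻¹ := by
  rw [Real.rpow_neg (by positivity), Real.rpow_pow_comm zero_le_two]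

variable {s : ℕ → ℝ} {B α : ℝ}

theorem apply_two_pow_le_of_sq_le (hs : Antitone s) (hs0 : ∀ n, 0 ≤ s n) (hα : 0 ≤ α)
    (hB : s 1 ≤ B) (hstep : ∀ m : ℕ, 1 ≤ m → s (4 * m) ^ 2 ≤ B * (s (2 * m) * (m : ℝ) ^ (-α)))
    (k : ℕ) : s (2 ^ k) ≤ (2 ^ α) ^ 3 * B * ((2 ^ α) ^ k)⁻¹ := by
  have hB0 : 0 ≤ B := (hs0 1).trans hB
  have hq : (1 : ℝ) ≤ 2 ^ α := Real.one_le_rpow one_le_two hα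
  induction k using Nat.twoStepInduction with
  | zero =>
    simpa using hB.trans (le_mul_of_one_le_left hB0 (one_le_pow₀ hq))
  | one =>
    calc s (2 ^ 1) ≤ s 1 := hs one_le_two
      _ ≤ (2 ^ α) ^ 2 * B := hB.trans (le_mul_of_one_le_left hB0 (one_le_pow₀ hq))
      _ = (2 ^ α) ^ 3 * B * ((2 ^ α) ^ 1)⁻¹ := by field_simp
  | more k _ ih =>
    refine le_of_sq_le_sq ?_ (by positivity)
    calc s (2 ^ (k + 2)) ^ 2
        ≤ B * (s (2 ^ (k + 1)) * ((2 ^ α) ^ k)⁻¹) := by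
          simpa only [pow_succ', ← mul_assoc, Nat.reduceMul, Nat.cast_pow, Nat.cast_ofNat,
            two_pow_rpow_neg] using hstep (2 ^ k) Nat.one_le_two_pow
      _ ≤ B * ((2 ^ α) ^ 3 * B * ((2 ^ α) ^ (k + 1))⁻¹ * ((2 ^ α) ^ k)⁻¹) := by gcongr
      _ = ((2 ^ α) ^ 3 * B * ((2 ^ α) ^ (k + 2))⁻¹) ^ 2 := by
          field_simp
          ring

theorem le_rpow_of_sq_le (hs : Antitone s) (hs0 : ∀ n, 0 ≤ s n) (hα : 0 ≤ α) (hB : s 1 ≤ B)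
    (hstep : ∀ m : ℕ, 1 ≤ m → s (4 * m) ^ 2 ≤ B * (s (2 * m) * (m : ℝ) ^ (-α)))
    {n : ℕ} (hn : 1 ≤ n) : s n ≤ 2 ^ (4 * α) * B * (n : ℝ) ^ (-α) := by
  have hB0 : 0 ≤ B := (hs0 1).trans hB
  have hlow : 2 ^ Nat.log 2 n ≤ n := Nat.pow_log_le_self 2 (by lia)
  have hhigh : (n : ℝ) ≤ 2 ^ (Nat.log 2 n + 1) := by
    exact_mod_cast (Nat.lt_pow_succ_log_self one_lt_two n).le
  calc s n ≤ s (2 ^ Nat.log 2 n) := hs hlow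
    _ ≤ (2 ^ α) ^ 3 * B * ((2 ^ α) ^ Nat.log 2 n)⁻¹ :=
        apply_two_pow_le_of_sq_le hs hs0 hα hB hstep _
    _ = 2 ^ (4 * α) * B * ((2 : ℝ) ^ (Nat.log 2 n + 1)) ^ (-α) := by
        rw [two_pow_rpow_neg, mul_comm 4 α, Real.rpow_mul zero_le_two, Real.rpow_ofNat]
        field_simp
        ring
    _ ≤ 2 ^ (4 * α) * B * (n : ℝ) ^ (-α) := by
        gcongr ?_ * ?_
        exact Real.rpow_le_rpow_of_nonpos (by positivity) hhigh (neg_nonpos.2 hα)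

variable {𝕜 H : Type*} [RCLike 𝕜] [NormedAddCommGroup H] [InnerProductSpace 𝕜 H]

theorem IsWeakGreedy.greedyError_le_rpow {γ : ℝ} {K : Set H} {f : ℕ → H}
    (hf : IsWeakGreedy 𝕜 γ K f) (hγ : 0 < γ) {C : ℝ} (hα : 0 ≤ α)
    (happrox : ∀ n : ℕ, 1 ≤ n → ∃ V : Submodule 𝕜 H, FiniteDimensional 𝕜 V ∧ finrank 𝕜 V ≤ n ∧
      ∀ y ∈ K, infDist y (V : Set H) ≤ C * (n : ℝ) ^ (-α))
    {n : ℕ} (hn : 1 ≤ n) :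
    greedyError 𝕜 K f n ≤ 2 ^ (4 * α) * (2 * C / γ ^ 2) * (n : ℝ) ^ (-α) := by
  refine le_rpow_of_sq_le (hf.antitone_greedyError hγ) (greedyError_nonneg K f) hα ?_ ?_ hn
  · obtain ⟨V, _, hV, hVC⟩ := happrox 1 le_rfl
    rw [le_div_iff₀' (by positivity)]
    exact hf.sq_mul_greedyError_one_le hγ hV (by simpa using hVC)
  · intro m hm
    obtain ⟨V, _, hV, hVC⟩ := happrox m hm
    have h := hf.sq_mul_greedyError_add_le hγ (by lia) hV hVC (2 * m)
    rw [← add_mul, mul_pow, ← le_div_iff₀' (by positivity)] at h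
    exact h.trans_eq (by ring)

end Rate

section OptimalPoints

variable {𝕜 Ω H : Type*} [RCLike 𝕜] [NormedAddCommGroup H] [InnerProductSpace 𝕜 H]
  {Ωtil : Set Ω} {Φ : Ω → H} {n : ℕ}

theorem exists_finrank_le_of_iSup_infDist_span_image_le [DecidableEq H]
    (hbdd : Bornology.IsBounded (Set.range Φ)) {r : ℝ}
    (happrox : ∃ X : Finset Ω, X.card ≤ n ∧
      ⨆ x, infDist (Φ x) (Submodule.span 𝕜 (X.image Φ : Set H) : Set H) ≤ r) :
    ∃ V : Submodule 𝕜 H, FiniteDimensional 𝕜 V ∧ finrank 𝕜 V ≤ n ∧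
      ∀ x, infDist (Φ x) (V : Set H) ≤ r := by
  obtain ⟨X, hX, hr⟩ := happrox
  exact ⟨Submodule.span 𝕜 (X.image Φ), inferInstance,
    (finrank_span_finset_le_card _).trans (Finset.card_image_le.trans hX),
    fun x => (le_ciSup (bddAbove_range_infDist hbdd _) x).trans hr⟩

theorem iInf_iSup_infDist_span_image_le [DecidableEq H] {r : ℝ} (hr : 0 ≤ r)
    (h : ∃ Y : Finset Ω, (Y : Set Ω) ⊆ Ωtil ∧ Y.card ≤ n ∧
      ∀ x ∈ Ωtil, infDist (Φ x) (Submodule.span 𝕜 (Φ '' Y) : Set H) ≤ r) :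
    ⨅ Y : {Y : Finset Ω // (Y : Set Ω) ⊆ Ωtil ∧ Y.card ≤ n}, ⨆ x : Ωtil,
      infDist (Φ x) (Submodule.span 𝕜 ((Y : Finset Ω).image Φ : Set H) : Set H) ≤ r := by
  obtain ⟨Y, hY, hcard, hle⟩ := h
  refine ciInf_le_of_le ⟨0, Set.forall_mem_range.2 fun _ =>
    Real.iSup_nonneg fun _ => infDist_nonneg⟩ ⟨Y, hY, hcard⟩ (Real.iSup_le (fun x => ?_) hr)
  rw [Finset.coe_image]
  exact hle x x.2

theorem optimal_points_on_subdomain_general (hbdd : Bornology.IsBounded (Φ '' Ωtil)) {C α : ℝ}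
    (hα : 0 < α)
    (happrox : ∀ n : ℕ, 1 ≤ n → ∃ V : Submodule 𝕜 H, FiniteDimensional 𝕜 V ∧ finrank 𝕜 V ≤ n ∧
      ∀ x ∈ Ωtil, infDist (Φ x) (V : Set H) ≤ C * (n : ℝ) ^ (-α))
    (hn : 1 ≤ n) :
    ∃ Y : Finset Ω, (Y : Set Ω) ⊆ Ωtil ∧ Y.card ≤ n ∧ ∀ x ∈ Ωtil,
      infDist (Φ x) (Submodule.span 𝕜 (Φ '' Y) : Set H) ≤ 2 ^ (5 * α + 1) * C * (n : ℝ) ^ (-α) := by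
  classical
  rcases Ωtil.eq_empty_or_nonempty with rfl | hne
  · exact ⟨∅, by simp⟩
  have hγ : (0 : ℝ) < 2 ^ (-α / 2) := by positivity
  have hγsq : ((2 : ℝ) ^ (-α / 2)) ^ 2 = (2 ^ α)⁻¹ := by
    rw [← Real.rpow_mul_natCast zero_le_two, ← Real.rpow_neg zero_le_two]
    norm_num
  obtain ⟨f, hf⟩ := exists_isWeakGreedy (𝕜 := 𝕜) (hne.image Φ) hbdd
    (Real.rpow_lt_one_of_one_lt_of_neg one_lt_two (show -α / 2 < 0 by linarith))
  choose x hx hfx using hf.mem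
  have hspan : Submodule.span 𝕜 (Φ '' (Finset.range n).image x) = prefixSpan 𝕜 f n := by
    rw [Finset.coe_image, Finset.coe_range, ← Set.image_comp, prefixSpan]
    exact congrArg _ (Set.image_congr fun i _ => hfx i)
  refine ⟨(Finset.range n).image x, by simp [Set.subset_def, hx],
    Finset.card_image_le.trans_eq (Finset.card_range n), fun z hz => ?_⟩
  calc infDist (Φ z) (Submodule.span 𝕜 (Φ '' (Finset.range n).image x) : Set H)
      ≤ greedyError 𝕜 (Φ '' Ωtil) f n := by
        rw [hspan]
        exact hf.infDist_le_greedyError hγ n (Set.mem_image_of_mem Φ hz)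
    _ ≤ 2 ^ (4 * α) * (2 * C / (2 ^ (-α / 2)) ^ 2) * (n : ℝ) ^ (-α) :=
        hf.greedyError_le_rpow hγ hα.le (by simpa only [Set.forall_mem_image] using happrox) hn
    _ = 2 ^ (5 * α + 1) * C * (n : ℝ) ^ (-α) := by
        rw [hγsq, show 5 * α + 1 = 4 * α + α + 1 by ring, Real.rpow_add_one two_ne_zero,
          Real.rpow_add two_pos]
        field_simp

end OptimalPoints

/-- Error estimate for optimally chosen points on the subdomain: if interpolation on
`Ω` converges at rate `C₀ n^{-α}`, then the optimal `n`-point power-function value on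
an arbitrary subset `Ω̃ ⊆ Ω` is bounded by `2^{5α+1} C₀ n^{-α}`. -/
theorem optimal_points_on_subdomain
    {Ω : Type*} [Nonempty Ω] {H : Type*} [NormedAddCommGroup H] [DecidableEq H]
    [InnerProductSpace ℝ H] [CompleteSpace H]
    (Ωtil : Set Ω) (Φ : Ω → H)
    (hbound : ∀ x : Ω, ‖Φ x‖ ≤ 1) (hcomp : IsCompact (Set.range Φ))
    (C₀ α : ℝ) (hC₀ : 0 < C₀) (hα : 0 < α)
    (happrox : ∀ n : ℕ, 1 ≤ n → ∃ X : Finset Ω, X.card ≤ n ∧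
      (⨆ x : Ω, Metric.infDist (Φ x)
          ((Submodule.span ℝ ((X.image Φ : Finset H) : Set H) : Submodule ℝ H) : Set H))
        ≤ C₀ * (n : ℝ) ^ (-α)) :
    ∀ n : ℕ, 1 ≤ n →
      (⨅ Y : {Y : Finset Ω // (Y : Set Ω) ⊆ Ωtil ∧ Y.card ≤ n},
          ⨆ x : Ωtil, Metric.infDist (Φ (x : Ω))
            ((Submodule.span ℝ (((Y : Finset Ω).image Φ : Finset H) : Set H)
                : Submodule ℝ H) : Set H))
        ≤ 2 ^ (5 * α + 1) * C₀ * (n : ℝ) ^ (-α) := by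
  intro n hn
  refine iInf_iSup_infDist_span_image_le (by positivity) (optimal_points_on_subdomain_general
    (hcomp.isBounded.subset (Set.image_subset_range Φ Ωtil)) hα (fun k hk => ?_) hn)
  obtain ⟨V, hfin, hV, hle⟩ :=
    exists_finrank_le_of_iSup_infDist_span_image_le hcomp.isBounded (happrox k hk)
  exact ⟨V, hfin, hV, fun x _ => hle x⟩
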